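/- Let ϕ, φ, φ̂, f₂, f₃, m₁ be as in the context. Then f₂ and f₃ are (absolutely) integrable over ℝ, and ∫_ℝ f₂(x) dx = 4 m₁ and ∫_ℝ f₃(x) dx = −4 m₁. -/

import Mathlib

open MeasureTheory Real Filter Topology
open scoped ENNReal

noncomputable section

/-- Convolution on `ℝ²`: `(ϕ∗ϕ)(x) = ∫ ϕ(y) ϕ(x−y) dy`. -/
def conv2 (ϕ : ℝ × ℝ → ℝ) (x : ℝ × ℝ) : ℝ := ∫ y : ℝ × ℝ, ϕ y * ϕ (x - y)

/-- The Fourier transform on `ℝ²`: `ĝ(ξ) = ∫ g(x) e^{−i x·ξ} dx`. -/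
def ft2 (g : ℝ × ℝ → ℝ) (ξ : ℝ × ℝ) : ℂ :=
  ∫ x : ℝ × ℝ, (g x : ℂ) * Complex.exp (-Complex.I * ((x.1 : ℂ) * (ξ.1 : ℂ) + (x.2 : ℂ) * (ξ.2 : ℂ)))

/-- `f₁(x) = (x/π) ∫_{ℝ²} e^{ixη₁} (−i η₁ η₂²)/(η₁²+η₂²)² φ̂(η) dη` with `φ = ϕ∗ϕ`. -/
def f1 (ϕ : ℝ × ℝ → ℝ) (x : ℝ) : ℂ :=
  ((x / π : ℝ) : ℂ) * ∫ η : ℝ × ℝ,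
    Complex.exp (Complex.I * (x : ℂ) * (η.1 : ℂ)) *
      (-Complex.I * (η.1 : ℂ) * (η.2 : ℂ) ^ 2 / ((η.1 : ℂ) ^ 2 + (η.2 : ℂ) ^ 2) ^ 2) *
      ft2 (conv2 ϕ) η

/-- `f₂(x) = (x/π) ∫_{ℝ²} e^{ixη₁} (−i η₁ (η₁²−η₂²))/(η₁²+η₂²)² φ̂(η) dη` with `φ = ϕ∗ϕ`. -/
def f2 (ϕ : ℝ × ℝ → ℝ) (x : ℝ) : ℂ :=
  ((x / π : ℝ) : ℂ) * ∫ η : ℝ × ℝ,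
    Complex.exp (Complex.I * (x : ℂ) * (η.1 : ℂ)) *
      (-Complex.I * (η.1 : ℂ) * ((η.1 : ℂ) ^ 2 - (η.2 : ℂ) ^ 2) /
        ((η.1 : ℂ) ^ 2 + (η.2 : ℂ) ^ 2) ^ 2) *
      ft2 (conv2 ϕ) η

/-- `f₃ = f₁ − 1`. -/
def f3 (ϕ : ℝ × ℝ → ℝ) (x : ℝ) : ℂ := f1 ϕ x - 1

/-- `m₁ = ∫_{ℝ²} |x| (ϕ∗ϕ)(x) dx`. -/
def m1 (ϕ : ℝ × ℝ → ℝ) : ℝ := ∫ x : ℝ × ℝ, Real.sqrt (x.1 ^ 2 + x.2 ^ 2) * conv2 ϕ x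

/-- `m₂ = ∫_{ℝ²} |x|² (ϕ∗ϕ)(x) dx`. -/
def m2 (ϕ : ℝ × ℝ → ℝ) : ℝ := ∫ x : ℝ × ℝ, (x.1 ^ 2 + x.2 ^ 2) * conv2 ϕ x

/-!
Up to the factor `x / π`, both `f₁ x` and `f₂ x` are pairings of `φ̂` with a kernel
`e^{ixη₁} (-i η₁) (a η₁² + b η₂²) / |η|⁴`. Since `φ̂` is radial, only the circular averages of the
kernel matter. Integrating by parts in the angle identifies them with the Fourier transform of an
explicit radial function `h_x` supported in the disc of radius `|x|`, so Parseval's identity turns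
the pairing into `∫ φ h_x`. This uses that `φ̂ = ϕ̂²` is integrable, which is Plancherel for `ϕ`.
Subtracting the limit `(a + b) ∫ φ` at infinity leaves `∫ φ(y) k(|y|, x) dy` with a kernel of
quadratic decay in `x` such that `∫ k(r, x) dx = -4 b r`, and Fubini's theorem concludes.
-/

open scoped FourierTransform Convolution

section Radial

variable {α : Type*}

/-- A function on the plane is radial if it depends only on the Euclidean norm, here expressed
through its square since the norm of `ℝ × ℝ` is the maximum norm. -/
def IsRadial (f : ℝ × ℝ → α) : Prop :=
  ∀ x y : ℝ × ℝ, x.1 ^ 2 + x.2 ^ 2 = y.1 ^ 2 + y.2 ^ 2 → f x = f y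

/-- The counterclockwise rotation of the plane `ℝ × ℝ` by the angle `θ`. -/
def planeRotation (θ : ℝ) : (ℝ × ℝ) ≃L[ℝ] ℝ × ℝ :=
  (Complex.equivRealProdCLM.symm.trans
    (rotation (Circle.exp θ)).toContinuousLinearEquiv).trans Complex.equivRealProdCLM

lemma planeRotation_apply (θ : ℝ) (x : ℝ × ℝ) :
    planeRotation θ x = (cos θ * x.1 - sin θ * x.2, cos θ * x.2 + sin θ * x.1) := by
  have hexp : (Circle.exp θ : ℂ) = (cos θ : ℂ) + (sin θ : ℂ) * Complex.I := by
    rw [Circle.coe_exp, Complex.exp_mul_I]; simp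
  have hdef : planeRotation θ x = (((Circle.exp θ : ℂ) * (⟨x.1, x.2⟩ : ℂ)).re,
    ((Circle.exp θ : ℂ) * (⟨x.1, x.2⟩ : ℂ)).im) := rfl
  rw [hdef, hexp]
  simp [Complex.cos_ofReal_re, Complex.sin_ofReal_re]

lemma sq_add_sq_planeRotation (θ : ℝ) (x : ℝ × ℝ) :
    (planeRotation θ x).1 ^ 2 + (planeRotation θ x).2 ^ 2 = x.1 ^ 2 + x.2 ^ 2 := by
  rw [planeRotation_apply]
  linear_combination (x.1 ^ 2 + x.2 ^ 2) * sin_sq_add_cos_sq θ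

lemma measurePreserving_planeRotation (θ : ℝ) : MeasurePreserving (planeRotation θ) :=
  (Complex.volume_preserving_equiv_real_prod.comp
    (rotation (Circle.exp θ)).measurePreserving).comp
      Complex.volume_preserving_equiv_real_prod.symm

lemma integral_comp_planeRotation {E : Type*} [NormedAddCommGroup E] [NormedSpace ℝ E]
    (θ : ℝ) (F : ℝ × ℝ → E) : ∫ x, F (planeRotation θ x) = ∫ x, F x :=
  (measurePreserving_planeRotation θ).integral_comp
    (planeRotation θ).toHomeomorph.measurableEmbedding F

lemma exists_planeRotation_eq (x : ℝ × ℝ) :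
    ∃ θ, planeRotation θ (√(x.1 ^ 2 + x.2 ^ 2), 0) = x := by
  refine ⟨Complex.arg ⟨x.1, x.2⟩, ?_⟩
  have hnorm : ‖(⟨x.1, x.2⟩ : ℂ)‖ = √(x.1 ^ 2 + x.2 ^ 2) := Complex.norm_eq_sqrt_sq_add_sq _
  have hcos := Complex.norm_mul_cos_arg ⟨x.1, x.2⟩
  have hsin := Complex.norm_mul_sin_arg ⟨x.1, x.2⟩
  rw [hnorm, mul_comm] at hcos hsin
  rw [planeRotation_apply]
  ext <;> simp [hcos, hsin]

lemma isRadial_iff_comp_planeRotation {f : ℝ × ℝ → α} :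
    IsRadial f ↔ ∀ θ x, f (planeRotation θ x) = f x := by
  refine ⟨fun hf θ x ↦ hf _ _ (sq_add_sq_planeRotation θ x), fun hf x y hxy ↦ ?_⟩
  obtain ⟨θ, hθ⟩ := exists_planeRotation_eq x
  obtain ⟨θ', hθ'⟩ := exists_planeRotation_eq y
  rw [← hθ, ← hθ', hf, hf, hxy]

lemma IsRadial.conv2 {ϕ : ℝ × ℝ → ℝ} (hϕ : IsRadial ϕ) : IsRadial (conv2 ϕ) := by
  rw [isRadial_iff_comp_planeRotation] at hϕ ⊢
  intro θ x
  unfold _root_.conv2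
  rw [← integral_comp_planeRotation θ]
  simp only [← map_sub, hϕ]

lemma IsRadial.ft2 {g : ℝ × ℝ → ℝ} (hg : IsRadial g) : IsRadial (ft2 g) := by
  rw [isRadial_iff_comp_planeRotation] at hg ⊢
  intro θ ξ
  unfold _root_.ft2
  rw [← integral_comp_planeRotation θ]
  congr with x
  rw [hg]
  congr 2
  simp only [planeRotation_apply]
  have hcs := congrArg Complex.ofReal (sin_sq_add_cos_sq θ)
  push_cast at hcs ⊢
  linear_combination (-Complex.I * (x.1 * ξ.1 + x.2 * ξ.2)) * hcs

end Radial

section Integration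

variable {E : Type*} [NormedAddCommGroup E] [NormedSpace ℝ E]

lemma integrableOn_smul_comp_polarCoord_symm {F : ℝ × ℝ → E} (hF : Integrable F) :
    IntegrableOn (fun p ↦ p.1 • F (polarCoord.symm p)) polarCoord.target := by
  have himage : IntegrableOn F (polarCoord.symm '' polarCoord.target) := hF.integrableOn
  rw [integrableOn_image_iff_integrableOn_abs_det_fderiv_smul volume
    polarCoord.open_target.measurableSet
    (fun p _ ↦ (hasFDerivAt_polarCoord_symm p).hasFDerivWithinAt) polarCoord.symm.injOn] at himage
  refine himage.congr_fun (fun p hp ↦ ?_) polarCoord.open_target.measurableSet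
  dsimp only
  rw [det_fderivPolarCoordSymm, abs_of_pos hp.1]

lemma integral_mul_of_isRadial {F k : ℝ × ℝ → ℂ} (hF : IsRadial F)
    (hFk : Integrable fun η ↦ F η * k η) :
    ∫ η, F η * k η =
      ∫ ρ in Set.Ioi (0 : ℝ), ρ * F (ρ, 0) * ∫ θ in -π..π, k (ρ * cos θ, ρ * sin θ) := by
  have hpolar := integrableOn_smul_comp_polarCoord_symm hFk
  rw [polarCoord_target] at hpolar
  rw [← integral_comp_polarCoord_symm, polarCoord_target, Measure.volume_eq_prod,
    setIntegral_prod _ hpolar]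
  refine setIntegral_congr_fun measurableSet_Ioi fun ρ _ ↦ ?_
  dsimp only
  rw [intervalIntegral.integral_of_le (neg_le_self pi_pos.le), integral_Ioc_eq_integral_Ioo,
    ← integral_const_mul]
  congr with θ
  have hρ : F (ρ * cos θ, ρ * sin θ) = F (ρ, 0) :=
    hF _ _ (by linear_combination ρ ^ 2 * sin_sq_add_cos_sq θ)
  rw [polarCoord_symm_apply, hρ, Complex.real_smul, mul_assoc]

lemma integrable_mul_of_norm_le_rpow [FiniteDimensional ℝ E] [MeasurableSpace E] [BorelSpace E]
    {μ : Measure E} [μ.IsAddHaarMeasure] {k f : E → ℂ} {α C B : ℝ}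
    (hα : 0 ≤ α) (hαE : α < Module.finrank ℝ E) (hk : AEStronglyMeasurable k μ)
    (hkC : ∀ x, ‖k x‖ ≤ C * ‖x‖ ^ (-α)) (hf : Integrable f μ) (hfB : ∀ x, ‖f x‖ ≤ B) :
    Integrable (fun x ↦ f x * k x) μ := by
  have hdim : 1 ≤ Module.finrank ℝ E := by exact_mod_cast hα.trans_lt hαE
  rw [← integrableOn_univ, ← Set.union_compl_self (Metric.ball (0 : E) 1)]
  refine IntegrableOn.union ?_ ?_
  · have hkball : IntegrableOn k (Metric.ball 0 1) μ :=
      integrableOn_ball_of_norm_le_rpow hdim hαE (ae_of_all _ hkC) hk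
    exact hkball.bdd_mul hf.1.restrict (ae_of_all _ hfB)
  · refine hf.integrableOn.mul_bdd (c := |C|) hk.restrict ?_
    refine ae_restrict_of_forall_mem Metric.isOpen_ball.measurableSet.compl fun x hx ↦ ?_
    have hx1 : 1 ≤ ‖x‖ := by simpa using hx
    calc ‖k x‖ ≤ C * ‖x‖ ^ (-α) := hkC x
      _ ≤ |C| * 1 := mul_le_mul (le_abs_self C) (rpow_le_one_of_one_le_of_nonpos hx1 (by simpa))
          (by positivity) (abs_nonneg C)
      _ = |C| := mul_one _

lemma intervalIntegral_neg_self_of_even {f : ℝ → E} {a : ℝ} (hf : f.Even)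
    (hfa : IntervalIntegrable f volume 0 a) : ∫ x in -a..a, f x = (2 : ℝ) • ∫ x in 0..a, f x := by
  have hneg : (fun x ↦ f (-x)) = f := funext hf
  have hleft : IntervalIntegrable f volume (-a) 0 := by
    rw [IntervalIntegrable.iff_comp_neg, hneg, neg_zero] at hfa
    exact hfa.symm
  have hreflect : ∫ x in -a..0, f x = ∫ x in 0..a, f x := by
    rw [← neg_zero, ← intervalIntegral.integral_comp_neg, hneg, neg_zero]
  rw [← intervalIntegral.integral_add_adjacent_intervals hleft hfa, hreflect, two_smul]

lemma setIntegral_Icc_neg_abs_abs {c : ℝ} (hc : c ≠ 0) (G : ℝ → E) :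
    ∫ s in Set.Icc (-|c|) |c|, G s = ∫ θ in 0..π, (|c| * sin θ) • G (c * cos θ) := by
  have himage : (fun θ ↦ c * cos θ) '' Set.Icc 0 π = Set.Icc (-|c|) |c| := by
    rw [← Set.image_image (c * ·) cos, bijOn_cos.image_eq, ← Set.uIcc_of_le (by norm_num),
      Set.image_const_mul_uIcc, mul_neg_one, mul_one, Set.uIcc, abs, neg_sup, neg_neg,
      sup_comm]
  have hinj : Set.InjOn (fun θ ↦ c * cos θ) (Set.Icc 0 π) :=
    fun θ hθ θ' hθ' h ↦ injOn_cos hθ hθ' (mul_left_cancel₀ hc h)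
  rw [← himage, integral_image_eq_integral_abs_deriv_smul measurableSet_Icc
    (fun θ _ ↦ ((hasDerivAt_cos θ).const_mul c).hasDerivWithinAt) hinj,
    intervalIntegral.integral_of_le pi_pos.le, ← integral_Icc_eq_integral_Ioc]
  refine setIntegral_congr_fun measurableSet_Icc fun θ hθ ↦ ?_
  rw [abs_mul, abs_neg, abs_of_nonneg (sin_nonneg_of_mem_Icc hθ)]

end Integration

section Fourier

variable {E F : Type*} [NormedAddCommGroup E] [InnerProductSpace ℝ E] [FiniteDimensional ℝ E]
  [MeasurableSpace E] [BorelSpace E] [NormedAddCommGroup F]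

lemma integral_fourier_smul_eq_of_integrable [NormedSpace ℂ F] [CompleteSpace F]
    {f : E → ℂ} {g : E → F} (hf : Integrable f) (hg : Integrable g) :
    ∫ ξ, 𝓕 f ξ • g ξ = ∫ x, f x • 𝓕 g x := by
  have hflip := VectorFourier.integral_fourierIntegral_smul_eq_flip (L := innerₗ E)
    Real.continuous_fourierChar continuous_inner hf hg
  rwa [flip_innerₗ] at hflip

lemma fourier_fourier_apply [NormedSpace ℂ F] [CompleteSpace F] {f : E → F} (hfc : Continuous f)
    (hf : Integrable f) (hf' : Integrable (𝓕 f)) (x : E) : 𝓕 (𝓕 f) x = f (-x) := by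
  rw [← neg_neg x, ← Real.fourierInv_eq_fourier_neg, neg_neg, hfc.fourierInv_fourier_eq hf hf']

/- Both sides define the same tempered distribution, because the integral Fourier transform is
self-adjoint on integrable functions. -/
lemma coeFn_fourier_toLp_ae_eq [InnerProductSpace ℂ F] [CompleteSpace F] {f : E → F}
    (hf : Integrable f) (hf2 : MemLp f 2) :
    (𝓕 (hf2.toLp f) : Lp F 2 (volume : Measure E)) =ᵐ[volume] 𝓕 f := by
  have hcont : Continuous (𝓕 f) := VectorFourier.fourierIntegral_continuous
    Real.continuous_fourierChar continuous_inner hf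
  have hloc : LocallyIntegrable (𝓕 (hf2.toLp f) : Lp F 2 (volume : Measure E)) :=
    (Lp.memLp _).locallyIntegrable one_le_two
  refine ae_eq_of_integral_contDiff_smul_eq hloc hcont.locallyIntegrable fun g hg hgc ↦ ?_
  let G : SchwartzMap E ℂ := (hgc.comp_left Complex.ofReal_zero).toSchwartzMap
    (Complex.ofRealCLM.contDiff.comp hg)
  calc ∫ x, g x • (𝓕 (hf2.toLp f) : Lp F 2 (volume : Measure E)) x
      = Lp.toTemperedDistribution (𝓕 (hf2.toLp f)) G := by
        rw [Lp.toTemperedDistribution_apply]; rfl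
    _ = ∫ x, 𝓕 G x • hf2.toLp f x := by
        rw [← Lp.fourier_toTemperedDistribution_eq, TemperedDistribution.fourier_apply,
          Lp.toTemperedDistribution_apply]
    _ = ∫ x, 𝓕 (G : E → ℂ) x • f x := by
        refine integral_congr_ae ?_
        filter_upwards [hf2.coeFn_toLp] with x hx
        rw [hx, SchwartzMap.fourier_coe]
    _ = ∫ x, g x • 𝓕 f x := integral_fourier_smul_eq_of_integrable G.integrable hf

lemma memLp_two_fourier [InnerProductSpace ℂ F] [CompleteSpace F] {f : E → F}
    (hf : Integrable f) (hf2 : MemLp f 2) : MemLp (𝓕 f) 2 :=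
  (memLp_congr_ae (coeFn_fourier_toLp_ae_eq hf hf2)).1 (Lp.memLp _)

end Fourier

section PlaneFourier

variable {E : Type*} [NormedAddCommGroup E]

lemma integral_comp_re_im [NormedSpace ℝ E] (F : ℝ × ℝ → E) :
    ∫ z : ℂ, F (z.re, z.im) = ∫ y, F y :=
  Complex.volume_preserving_equiv_real_prod.integral_comp
    Complex.measurableEquivRealProd.measurableEmbedding F

lemma integral_comp_smul_re_im [NormedSpace ℝ E] (F : ℝ × ℝ → E) (R : ℝ) :
    ∫ z : ℂ, F (R • (z.re, z.im)) = (R ^ 2)⁻¹ • ∫ y, F y := by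
  rw [integral_comp_re_im fun y ↦ F (R • y), Measure.integral_comp_smul, Module.finrank_prod,
    Module.finrank_self, one_add_one_eq_two, abs_of_nonneg (by positivity)]

lemma integrable_comp_smul_re_im_iff {F : ℝ × ℝ → E} {R : ℝ} (hR : R ≠ 0) :
    Integrable (fun z : ℂ ↦ F (R • (z.re, z.im))) ↔ Integrable F :=
  (Complex.volume_preserving_equiv_real_prod.integrable_comp_emb
    Complex.measurableEquivRealProd.measurableEmbedding (g := fun y ↦ F (R • y))).trans
    (integrable_comp_smul_iff volume F hR)

/-- A real function on `ℝ × ℝ` viewed as a complex function on `ℂ`, which unlike `ℝ × ℝ` is an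
inner product space, so that Mathlib's Fourier transform applies. -/
def complexLift (g : ℝ × ℝ → ℝ) (z : ℂ) : ℂ := g (z.re, z.im)

variable {g h : ℝ × ℝ → ℝ}

lemma continuous_complexLift (hg : Continuous g) : Continuous (complexLift g) :=
  Complex.continuous_ofReal.comp (hg.comp (Complex.continuous_re.prodMk Complex.continuous_im))

lemma integrable_complexLift (hg : Integrable g) : Integrable (complexLift g) :=
  Complex.volume_preserving_equiv_real_prod.integrable_comp_of_integrable hg.ofReal

lemma memLp_complexLift {p : ℝ≥0∞} (hg : MemLp g p) : MemLp (complexLift g) p :=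
  hg.ofReal.comp_measurePreserving Complex.volume_preserving_equiv_real_prod

lemma fourier_complexLift (g : ℝ × ℝ → ℝ) (w : ℂ) :
    𝓕 (complexLift g) w = ft2 g ((2 * π) • (w.re, w.im)) := by
  rw [Real.fourier_eq', ft2, ← integral_comp_re_im]
  congr with z
  rw [complexLift, smul_eq_mul, mul_comm, Complex.inner]
  congr 2
  simp
  ring

lemma complexLift_conv2 (ϕ : ℝ × ℝ → ℝ) :
    complexLift (conv2 ϕ) =
      complexLift ϕ ⋆[ContinuousLinearMap.mul ℂ ℂ] complexLift ϕ := by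
  ext z
  rw [complexLift, conv2, ← integral_complex_ofReal, ← integral_comp_re_im]
  simp [convolution, complexLift]

lemma integrable_ft2_conv2 (hg : Integrable g) (hg2 : MemLp g 2) :
    Integrable (ft2 (conv2 g)) := by
  have hL2 := memLp_two_fourier (integrable_complexLift hg) (memLp_complexLift hg2)
  rw [← integrable_comp_smul_re_im_iff two_pi_pos.ne']
  simp_rw [← fourier_complexLift, complexLift_conv2, Real.fourier_mul_convolution_eq
    (integrable_complexLift hg) (integrable_complexLift hg)]
  exact hL2.integrable_mul hL2

lemma integral_ft2_mul_ft2 (hg : Continuous g) (hgi : Integrable g) (hgf : Integrable (ft2 g))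
    (hh : Integrable h) :
    ∫ η, ft2 g η * ft2 h η = ((4 * π ^ 2 * ∫ y, g (-y) * h y : ℝ) : ℂ) := by
  have hGf : Integrable (𝓕 (complexLift g)) := by
    rwa [funext (fourier_complexLift g), integrable_comp_smul_re_im_iff two_pi_pos.ne']
  have hflip := integral_fourier_smul_eq_of_integrable (integrable_complexLift hh) hGf
  have hleft : ∫ w, 𝓕 (complexLift h) w • 𝓕 (complexLift g) w
      = ((2 * π) ^ 2)⁻¹ • ∫ η, ft2 g η * ft2 h η := by
    simp_rw [← integral_comp_smul_re_im, fourier_complexLift, smul_eq_mul, mul_comm]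
  have hright : ∫ z, complexLift h z • 𝓕 (𝓕 (complexLift g)) z
      = ((∫ y, g (-y) * h y : ℝ) : ℂ) := by
    simp_rw [← integral_complex_ofReal, ← integral_comp_re_im,
      fourier_fourier_apply (continuous_complexLift hg) (integrable_complexLift hgi) hGf]
    simp [complexLift, mul_comm]
  rw [hleft, hright, inv_smul_eq_iff₀ (by positivity)] at hflip
  rw [hflip, Complex.real_smul]
  push_cast
  ring

lemma norm_exp_neg_I_mul_inner (x ξ : ℝ × ℝ) :
    ‖Complex.exp (-Complex.I * ((x.1 : ℂ) * ξ.1 + (x.2 : ℂ) * ξ.2))‖ = 1 := by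
  rw [← Complex.norm_exp_ofReal_mul_I (-(x.1 * ξ.1 + x.2 * ξ.2))]
  push_cast
  ring_nf

lemma norm_ft2_le (g : ℝ × ℝ → ℝ) (ξ : ℝ × ℝ) : ‖ft2 g ξ‖ ≤ ∫ x, ‖g x‖ := by
  refine (norm_integral_le_integral_norm _).trans_eq ?_
  simp_rw [norm_mul, norm_exp_neg_I_mul_inner, mul_one, Complex.norm_real]

lemma continuous_ft2 (hg : Integrable g) : Continuous (ft2 g) := by
  refine continuous_of_dominated (bound := fun x ↦ ‖g x‖)
    (fun ξ ↦ hg.ofReal.aestronglyMeasurable.mul (by fun_prop))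
    (fun ξ ↦ ae_of_all _ fun x ↦ ?_) hg.norm (ae_of_all _ fun x ↦ by fun_prop)
  rw [norm_mul, norm_exp_neg_I_mul_inner, mul_one, Complex.norm_real]

lemma ft2_apply_fst_zero (hg : Integrable g) (ρ : ℝ) :
    ft2 g (ρ, 0) = ∫ s, ((∫ t, g (s, t) : ℝ) : ℂ) * Complex.exp (-Complex.I * (s * ρ)) := by
  have hint : Integrable (fun x : ℝ × ℝ ↦
      (g x : ℂ) * Complex.exp (-Complex.I * ((x.1 : ℂ) * ρ + (x.2 : ℂ) * (0 : ℝ)))) :=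
    hg.ofReal.mul_bdd (by fun_prop) (ae_of_all _ fun x ↦ (norm_exp_neg_I_mul_inner x (ρ, 0)).le)
  rw [ft2, Measure.volume_eq_prod, integral_prod _ hint]
  simp_rw [← integral_complex_ofReal, ← integral_mul_const]
  simp

end PlaneFourier

section Kernel

lemma norm_sq_le_sq_add_sq (x : ℝ × ℝ) : ‖x‖ ^ 2 ≤ x.1 ^ 2 + x.2 ^ 2 := by
  rw [Prod.norm_def]
  rcases max_choice ‖x.1‖ ‖x.2‖ with h | h <;> rw [h, norm_eq_abs, sq_abs] <;> nlinarith

lemma abs_mul_sq_add_mul_sq_le (a b u v : ℝ) :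
    |a * u ^ 2 + b * v ^ 2| ≤ (|a| + |b|) * (u ^ 2 + v ^ 2) :=
  calc |a * u ^ 2 + b * v ^ 2|
      ≤ |a| * u ^ 2 + |b| * v ^ 2 :=
        (abs_add_le _ _).trans_eq (by rw [abs_mul, abs_mul, abs_sq, abs_sq])
    _ ≤ (|a| + |b|) * (u ^ 2 + v ^ 2) := by
        nlinarith [mul_nonneg (abs_nonneg a) (sq_nonneg v), mul_nonneg (abs_nonneg b) (sq_nonneg u)]

variable (a b x : ℝ)

/-- The factor multiplying `ĝ(η)` in `f₁` and `f₂`, with an arbitrary diagonal quadratic form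
`a η₁² + b η₂²` in the numerator: `f₁` is the case `(0, 1)` and `f₂` the case `(1, -1)`. -/
def cubicKernel (η : ℝ × ℝ) : ℂ :=
  Complex.exp (Complex.I * x * η.1) *
    (-Complex.I * η.1 * (a * (η.1 : ℂ) ^ 2 + b * (η.2 : ℂ) ^ 2) /
      ((η.1 : ℂ) ^ 2 + (η.2 : ℂ) ^ 2) ^ 2)

/-- The common form of `f₁` and `f₂`: the pairing of `ĝ` with `cubicKernel a b x`, multiplied by
`x / π`. -/
def cubicTransform (g : ℝ × ℝ → ℝ) : ℂ := ((x / π : ℝ) : ℂ) * ∫ η, cubicKernel a b x η * ft2 g η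

/-- The primitive of `cos θ (a cos² θ + b sin² θ)` that vanishes at `0` and `π`. -/
def angularPrimitive (θ : ℝ) : ℝ := a * sin θ + (b - a) * sin θ ^ 3 / 3

lemma norm_cubicKernel_le (η : ℝ × ℝ) :
    ‖cubicKernel a b x η‖ ≤ (|a| + |b|) * ‖η‖ ^ (-1 : ℝ) := by
  obtain rfl | hη := eq_or_ne η 0
  · simp [cubicKernel]
  have hM : 0 < ‖η‖ := norm_pos_iff.2 hη
  have hfst : |η.1| ≤ ‖η‖ := norm_fst_le η
  have hsq := norm_sq_le_sq_add_sq η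
  have hexp : ‖Complex.exp (Complex.I * x * η.1)‖ = 1 := by
    rw [← Complex.norm_exp_ofReal_mul_I (x * η.1)]
    push_cast
    ring_nf
  calc ‖cubicKernel a b x η‖
      = |η.1| * |a * η.1 ^ 2 + b * η.2 ^ 2| / (η.1 ^ 2 + η.2 ^ 2) ^ 2 := by
        rw [cubicKernel, norm_mul, hexp, one_mul, norm_div, norm_mul, norm_mul, norm_neg,
          Complex.norm_I, one_mul, Complex.norm_real, norm_eq_abs, norm_pow]
        congr 2
        · exact_mod_cast Complex.norm_real _
        · rw [← abs_of_nonneg (add_nonneg (sq_nonneg η.1) (sq_nonneg η.2))]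
          exact_mod_cast Complex.norm_real _
    _ ≤ ‖η‖ * ((|a| + |b|) * (η.1 ^ 2 + η.2 ^ 2)) / (η.1 ^ 2 + η.2 ^ 2) ^ 2 := by
        gcongr
        exact abs_mul_sq_add_mul_sq_le a b η.1 η.2
    _ = (|a| + |b|) * ‖η‖ / (η.1 ^ 2 + η.2 ^ 2) := by
        have : 0 < η.1 ^ 2 + η.2 ^ 2 := (pow_pos hM 2).trans_le hsq
        field_simp
    _ ≤ (|a| + |b|) * ‖η‖ / ‖η‖ ^ 2 := by gcongr
    _ = (|a| + |b|) * ‖η‖ ^ (-1 : ℝ) := by rw [rpow_neg_one]; field_simp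

lemma integrable_mul_cubicKernel {f : ℝ × ℝ → ℂ} {B : ℝ} (hf : Integrable f)
    (hfB : ∀ η, ‖f η‖ ≤ B) : Integrable fun η ↦ f η * cubicKernel a b x η := by
  have hmeas : Measurable (cubicKernel a b x) := by unfold cubicKernel; fun_prop
  refine integrable_mul_of_norm_le_rpow zero_le_one ?_ hmeas.aestronglyMeasurable
    (norm_cubicKernel_le a b x) hf hfB
  simp

lemma hasDerivAt_angularPrimitive (θ : ℝ) :
    HasDerivAt (angularPrimitive a b) (cos θ * (a * cos θ ^ 2 + b * sin θ ^ 2)) θ := by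
  have h := ((hasDerivAt_sin θ).const_mul a).add
    ((((hasDerivAt_sin θ).pow 3).const_mul (b - a)).div_const 3)
  refine h.congr_deriv ?_
  push_cast
  linear_combination (-a * cos θ) * sin_sq_add_cos_sq θ

lemma integral_exp_mul_deriv_angularPrimitive (t : ℝ) :
    ∫ θ in 0..π, Complex.exp (Complex.I * (t * cos θ : ℝ)) *
        ((cos θ * (a * cos θ ^ 2 + b * sin θ ^ 2) : ℝ) : ℂ) =
      Complex.I * t * ∫ θ in 0..π, Complex.exp (Complex.I * (t * cos θ : ℝ)) *
        ((sin θ * angularPrimitive a b θ : ℝ) : ℂ) := by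
  have hexp (θ : ℝ) : HasDerivAt (fun θ : ℝ ↦ Complex.exp (Complex.I * (t * cos θ : ℝ)))
      (Complex.exp (Complex.I * (t * cos θ : ℝ)) * (Complex.I * ((t * -sin θ : ℝ) : ℂ))) θ :=
    ((((hasDerivAt_cos θ).const_mul t).ofReal_comp).const_mul Complex.I).cexp
  rw [intervalIntegral.integral_mul_deriv_eq_deriv_mul (fun θ _ ↦ hexp θ)
    (fun θ _ ↦ (hasDerivAt_angularPrimitive a b θ).ofReal_comp)
    (Continuous.intervalIntegrable (by fun_prop) _ _)
    (Continuous.intervalIntegrable (by fun_prop) _ _)]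
  have hzero : angularPrimitive a b 0 = 0 := by simp [angularPrimitive]
  have hpi : angularPrimitive a b π = 0 := by simp [angularPrimitive]
  rw [hzero, hpi, Complex.ofReal_zero, mul_zero, mul_zero, sub_zero, zero_sub,
    ← intervalIntegral.integral_neg, ← intervalIntegral.integral_const_mul]
  congr with θ
  push_cast
  ring

variable {x} {ρ : ℝ}

lemma cubicKernel_polar (hρ : ρ ≠ 0) (θ : ℝ) :
    cubicKernel a b x (ρ * cos θ, ρ * sin θ) =
      -Complex.I / ρ * (Complex.exp (Complex.I * (x * ρ * cos θ : ℝ)) *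
        ((cos θ * (a * cos θ ^ 2 + b * sin θ ^ 2) : ℝ) : ℂ)) := by
  have hsq : ((ρ * cos θ : ℝ) : ℂ) ^ 2 + ((ρ * sin θ : ℝ) : ℂ) ^ 2 = (ρ : ℂ) ^ 2 := by
    norm_cast
    linear_combination ρ ^ 2 * sin_sq_add_cos_sq θ
  have hρ' : (ρ : ℂ) ≠ 0 := by exact_mod_cast hρ
  have hphase : Complex.I * x * (ρ * cos θ : ℝ) = Complex.I * (x * ρ * cos θ : ℝ) := by
    push_cast; ring
  rw [cubicKernel, hsq, hphase]
  push_cast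
  field_simp

lemma integral_cubicKernel_circle (hρ : ρ ≠ 0) :
    ∫ θ in -π..π, cubicKernel a b x (ρ * cos θ, ρ * sin θ) =
      2 * x * ∫ θ in 0..π, Complex.exp (Complex.I * (x * ρ * cos θ : ℝ)) *
        ((sin θ * angularPrimitive a b θ : ℝ) : ℂ) := by
  simp_rw [cubicKernel_polar a b hρ, intervalIntegral.integral_const_mul]
  rw [intervalIntegral_neg_self_of_even (fun θ ↦ by simp only [cos_neg, sin_neg, neg_sq])
    (Continuous.intervalIntegrable (by fun_prop) _ _), integral_exp_mul_deriv_angularPrimitive]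
  have hρ' : (ρ : ℂ) ≠ 0 := by exact_mod_cast hρ
  rw [Complex.real_smul]
  push_cast
  field_simp
  rw [Complex.I_sq]
  ring

end Kernel

section Disc

variable (a b x : ℝ)

/-- The radial function, supported in the disc of radius `|x|`, whose Fourier transform has the
same circular averages as `cubicKernel a b x`, up to the factor `4 * π * x`. -/
def discProfile (y : ℝ × ℝ) : ℝ :=
  if y.1 ^ 2 + y.2 ^ 2 < x ^ 2 then a + b + (a - b) * ((y.1 ^ 2 + y.2 ^ 2) / x ^ 2) else 0

lemma isRadial_discProfile : IsRadial (discProfile a b x) :=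
  fun y z h ↦ by simp only [discProfile, h]

lemma discProfile_neg : discProfile a b (-x) = discProfile a b x := by
  ext y
  simp only [discProfile, neg_sq]

lemma integrable_discProfile : Integrable (discProfile a b x) := by
  let D : Set (ℝ × ℝ) := {y | y.1 ^ 2 + y.2 ^ 2 < x ^ 2}
  have hD : MeasurableSet D := measurableSet_lt (by fun_prop) (by fun_prop)
  have hsub : D ⊆ Metric.closedBall 0 |x| := fun y hy ↦ mem_closedBall_zero_iff.2 <|
    abs_norm y ▸ sq_le_sq.1 ((norm_sq_le_sq_add_sq y).trans (le_of_lt hy))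
  have hcont : Continuous fun y : ℝ × ℝ ↦ a + b + (a - b) * ((y.1 ^ 2 + y.2 ^ 2) / x ^ 2) := by
    fun_prop
  exact ((hcont.continuousOn.integrableOn_compact (isCompact_closedBall 0 |x|)).mono_set
    hsub).integrable_indicator hD

lemma norm_discProfile_le (y : ℝ × ℝ) : ‖discProfile a b x y‖ ≤ |a + b| + |a - b| := by
  rw [discProfile]
  split_ifs with hy
  · have hratio : (y.1 ^ 2 + y.2 ^ 2) / x ^ 2 ≤ 1 := div_le_one_of_le₀ hy.le (sq_nonneg x)
    refine (norm_add_le _ _).trans ?_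
    rw [norm_mul, norm_of_nonneg (by positivity : 0 ≤ (y.1 ^ 2 + y.2 ^ 2) / x ^ 2)]
    exact add_le_add le_rfl (mul_le_of_le_one_right (norm_nonneg _) hratio)
  · rw [norm_zero]
    positivity

variable {x}

lemma integral_discProfile_slice (hx : x ≠ 0) {θ : ℝ} (hθ : θ ∈ Set.Icc 0 π) :
    ∫ t, discProfile a b x (x * cos θ, t) = 4 * |x| * angularPrimitive a b θ := by
  set A := |x| * sin θ with hA
  have hA₀ : 0 ≤ A := mul_nonneg (abs_nonneg x) (sin_nonneg_of_mem_Icc hθ)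
  have hA₂ : A ^ 2 = x ^ 2 * (1 - cos θ ^ 2) := by rw [hA, mul_pow, sq_abs, sin_sq]
  have hchord (t : ℝ) : (x * cos θ) ^ 2 + t ^ 2 < x ^ 2 ↔ t ∈ Set.Ioo (-A) A := by
    rw [Set.mem_Ioo, ← abs_lt, ← sq_lt_sq₀ (abs_nonneg t) hA₀, sq_abs, hA₂]
    constructor <;> intro h <;> linarith
  have hind : (fun t ↦ discProfile a b x (x * cos θ, t)) = (Set.Ioo (-A) A).indicator
      fun t ↦ a + b + (a - b) * cos θ ^ 2 + (a - b) / x ^ 2 * t ^ 2 := by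
    ext t
    simp only [discProfile, Set.indicator, hchord]
    split_ifs
    · field_simp
      ring
    · rfl
  rw [hind, integral_indicator measurableSet_Ioo, ← integral_Ioc_eq_integral_Ioo,
    ← intervalIntegral.integral_of_le (by linarith), intervalIntegral.integral_add
      (by simp) (Continuous.intervalIntegrable (by fun_prop) _ _),
    intervalIntegral.integral_const, intervalIntegral.integral_const_mul, integral_pow]
  calc (A - -A) • (a + b + (a - b) * cos θ ^ 2)
        + (a - b) / x ^ 2 * ((A ^ (2 + 1) - (-A) ^ (2 + 1)) / ((2 : ℕ) + 1))
      = 2 * A * (a + b + (a - b) * cos θ ^ 2 + (a - b) / 3 * (A ^ 2 / x ^ 2)) := by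
        push_cast
        rw [smul_eq_mul]
        ring
    _ = 4 * |x| * angularPrimitive a b θ := by
        rw [hA₂, mul_div_cancel_left₀ _ (pow_ne_zero 2 hx), cos_sq', hA, angularPrimitive]
        ring

lemma integral_discProfile_slice_of_abs_lt {s : ℝ} (hs : |x| < |s|) :
    ∫ t, discProfile a b x (s, t) = 0 := by
  have hzero (t : ℝ) : discProfile a b x (s, t) = 0 :=
    if_neg (by nlinarith [sq_lt_sq.2 hs, sq_nonneg t])
  simp only [hzero, integral_zero]

lemma ft2_discProfile (hx : x ≠ 0) (ρ : ℝ) :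
    ft2 (discProfile a b x) (ρ, 0) =
      4 * x ^ 2 * ∫ θ in 0..π, Complex.exp (Complex.I * (x * ρ * cos θ : ℝ)) *
        ((sin θ * angularPrimitive a b θ : ℝ) : ℂ) := by
  have hsupp (s : ℝ) (hs : s ∉ Set.Icc (-|x|) |x|) :
      ((∫ t, discProfile a b x (s, t) : ℝ) : ℂ) * Complex.exp (-Complex.I * (s * ρ)) = 0 := by
    rw [Set.mem_Icc, ← abs_le, not_le] at hs
    rw [integral_discProfile_slice_of_abs_lt a b hs, Complex.ofReal_zero, zero_mul]
  rw [ft2_apply_fst_zero (integrable_discProfile a b x),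
    ← setIntegral_eq_integral_of_forall_compl_eq_zero hsupp, ← abs_neg,
    setIntegral_Icc_neg_abs_abs (neg_ne_zero.2 hx), ← intervalIntegral.integral_const_mul]
  refine intervalIntegral.integral_congr fun θ hθ ↦ ?_
  rw [Set.uIcc_of_le pi_pos.le] at hθ
  rw [← discProfile_neg, integral_discProfile_slice a b (neg_ne_zero.2 hx) hθ, abs_neg,
    Complex.real_smul]
  have habs : ((|x| : ℝ) : ℂ) ^ 2 = (x : ℂ) ^ 2 := by exact_mod_cast sq_abs x
  have hphase : -Complex.I * ((-x * cos θ : ℝ) * ρ) = Complex.I * (x * ρ * cos θ : ℝ) := by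
    push_cast; ring
  rw [hphase]
  push_cast
  linear_combination (4 * Complex.sin θ * angularPrimitive a b θ
    * Complex.exp (Complex.I * (x * ρ * Complex.cos θ))) * habs

/- Both sides depend on `F` only through its restriction to a ray, and on the two kernels only
through their averages over circles. -/
lemma integral_mul_ft2_discProfile {F : ℝ × ℝ → ℂ} {B : ℝ} (hF : IsRadial F)
    (hFi : Integrable F) (hFB : ∀ η, ‖F η‖ ≤ B) (hx : x ≠ 0) :
    ∫ η, F η * ft2 (discProfile a b x) η = 4 * π * x * ∫ η, F η * cubicKernel a b x η := by
  have hdisc := integrable_discProfile a b x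
  have hint : Integrable fun η ↦ F η * ft2 (discProfile a b x) η :=
    hFi.mul_bdd (continuous_ft2 hdisc).aestronglyMeasurable (ae_of_all _ (norm_ft2_le _))
  rw [integral_mul_of_isRadial hF hint,
    integral_mul_of_isRadial hF (integrable_mul_cubicKernel a b x hFi hFB),
    ← integral_const_mul]
  refine setIntegral_congr_fun measurableSet_Ioi fun ρ (hρ : 0 < ρ) ↦ ?_
  have hrad (θ : ℝ) :
      ft2 (discProfile a b x) (ρ * cos θ, ρ * sin θ) = ft2 (discProfile a b x) (ρ, 0) :=
    (isRadial_discProfile a b x).ft2 _ _ (by linear_combination ρ ^ 2 * sin_sq_add_cos_sq θ)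
  simp only [hrad, intervalIntegral.integral_const, ft2_discProfile a b hx,
    integral_cubicKernel_circle a b hρ.ne', Complex.real_smul]
  push_cast
  ring

lemma cubicTransform_eq_integral_mul_discProfile {g : ℝ × ℝ → ℝ} (hg : Continuous g)
    (hgi : Integrable g) (hgf : Integrable (ft2 g)) (hgr : IsRadial g) (hx : x ≠ 0) :
    cubicTransform a b x g = ((∫ y, g y * discProfile a b x y : ℝ) : ℂ) := by
  have hgeven (y : ℝ × ℝ) : g (-y) = g y := hgr _ _ (by simp)
  have hparseval := integral_ft2_mul_ft2 hg hgi hgf (integrable_discProfile a b x)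
  rw [integral_mul_ft2_discProfile a b hgr.ft2 hgf (norm_ft2_le g) hx] at hparseval
  simp_rw [hgeven] at hparseval
  have hπ : (π : ℂ) ≠ 0 := by exact_mod_cast pi_ne_zero
  simp_rw [cubicTransform, mul_comm (cubicKernel a b x _)]
  push_cast at hparseval ⊢
  rw [div_mul_eq_mul_div, div_eq_iff hπ]
  refine mul_left_cancel₀ (mul_ne_zero (by norm_num : (4 : ℂ) ≠ 0) hπ) ?_
  linear_combination hparseval

end Disc

section Tail

variable (c d r x : ℝ)

/-- The even function of `x` equal to `d` for `|x| ≤ |r|` and decaying like `c * r ^ 2 / x ^ 2`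
beyond: the contribution of the circle of radius `r` to a `cubicTransform` at `x`, after subtraction
of its limit as `x → ∞`. -/
def tailProfile : ℝ := if r ^ 2 < x ^ 2 then c * (r ^ 2 / x ^ 2) else d

lemma measurable_tailProfile : Measurable fun p : ℝ × ℝ ↦ tailProfile c d p.1 p.2 :=
  Measurable.ite (measurableSet_lt (by fun_prop) (by fun_prop)) (by fun_prop) (by fun_prop)

lemma norm_tailProfile : ‖tailProfile c d r x‖ = tailProfile |c| |d| r x := by
  unfold tailProfile
  split_ifs
  · rw [norm_mul, norm_eq_abs, norm_of_nonneg (by positivity)]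
  · rfl

lemma norm_tailProfile_le :
    ‖tailProfile c d r x‖ ≤ (|c| + |d|) * (1 + r ^ 2) * (1 + x ^ 2)⁻¹ := by
  have hc := abs_nonneg c
  have hd := abs_nonneg d
  rw [norm_tailProfile, tailProfile, ← div_eq_mul_inv, le_div_iff₀ (by positivity)]
  split_ifs with h
  · have hx : 0 < x ^ 2 := (sq_nonneg r).trans_lt h
    have hratio : r ^ 2 / x ^ 2 * (1 + x ^ 2) ≤ 1 + r ^ 2 := by
      rw [div_mul_eq_mul_div, div_le_iff₀ hx]
      linarith
    rw [mul_assoc]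
    gcongr
    linarith
  · exact mul_le_mul (by linarith) (by linarith) (by positivity) (by positivity)

lemma integrable_tailProfile : Integrable (tailProfile c d r) :=
  (integrable_inv_one_add_sq.const_mul _).mono'
    ((measurable_tailProfile c d).comp measurable_prodMk_left).aestronglyMeasurable
    (ae_of_all _ (norm_tailProfile_le c d r))

variable {r}

lemma integral_Ioc_tailProfile (hr : 0 ≤ r) : ∫ x in Set.Ioc 0 r, tailProfile c d r x = d * r := by
  have hinner : Set.EqOn (tailProfile c d r) (fun _ ↦ d) (Set.Ioc 0 r) := fun x hx ↦
    if_neg (not_lt.2 (pow_le_pow_left₀ hx.1.le hx.2 2))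
  rw [setIntegral_congr_fun measurableSet_Ioc hinner]
  simp [hr, mul_comm]

lemma integral_Ioi_tailProfile (hr : 0 ≤ r) : ∫ x in Set.Ioi r, tailProfile c d r x = c * r := by
  have houter : Set.EqOn (tailProfile c d r) (fun x ↦ c * r ^ 2 * x ^ (-2 : ℝ)) (Set.Ioi r) := by
    intro x (hx : r < x)
    dsimp only
    rw [tailProfile, if_pos (pow_lt_pow_left₀ hx hr two_ne_zero), rpow_neg (hr.trans hx.le),
      rpow_two]
    ring
  rw [setIntegral_congr_fun measurableSet_Ioi houter, integral_const_mul]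
  obtain rfl | hr := hr.eq_or_lt
  · simp
  · rw [integral_Ioi_rpow_of_lt (by norm_num) hr, show (-2 + 1 : ℝ) = -1 by norm_num,
      rpow_neg_one]
    field_simp

lemma integral_tailProfile (hr : 0 ≤ r) : ∫ x, tailProfile c d r x = 2 * (c + d) * r := by
  have heven (x : ℝ) : tailProfile c d r x = tailProfile c d r |x| := by
    simp only [tailProfile, sq_abs]
  have hint := integrable_tailProfile c d r
  rw [integral_congr_ae (ae_of_all _ heven), integral_comp_abs (f := tailProfile c d r),
    ← Set.Ioc_union_Ioi_eq_Ioi hr, setIntegral_union (Set.Ioc_disjoint_Ioi le_rfl)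
      measurableSet_Ioi hint.integrableOn hint.integrableOn,
    integral_Ioc_tailProfile c d hr, integral_Ioi_tailProfile c d hr]
  ring

variable {α : Type*} [MeasurableSpace α] {μ : Measure α} [SFinite μ] {R g : α → ℝ}

lemma integrable_prod_mul_tailProfile (hR : Measurable R) (hR₀ : ∀ y, 0 ≤ R y)
    (hg : AEStronglyMeasurable g μ) (hRg : Integrable (fun y ↦ R y * g y) μ) :
    Integrable (fun p : ℝ × α ↦ g p.2 * tailProfile c d (R p.2) p.1) (volume.prod μ) := by
  have hmeas : Measurable fun p : ℝ × α ↦ tailProfile c d (R p.2) p.1 :=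
    (measurable_tailProfile c d).comp ((hR.comp measurable_snd).prodMk measurable_fst)
  have hprod : AEStronglyMeasurable (fun p : ℝ × α ↦ g p.2 * tailProfile c d (R p.2) p.1)
      (volume.prod μ) := hg.comp_snd.mul hmeas.aestronglyMeasurable
  refine (integrable_prod_iff' hprod).2
    ⟨ae_of_all _ fun y ↦ (integrable_tailProfile c d (R y)).const_mul (g y), ?_⟩
  simp only [norm_mul, norm_tailProfile, integral_const_mul, integral_tailProfile _ _ (hR₀ _)]
  refine (hRg.norm.const_mul (2 * (|c| + |d|))).congr (ae_of_all _ fun y ↦ ?_)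
  simp only [norm_mul, norm_of_nonneg (hR₀ y)]
  ring

lemma integral_integral_mul_tailProfile (hR : Measurable R) (hR₀ : ∀ y, 0 ≤ R y)
    (hg : AEStronglyMeasurable g μ) (hRg : Integrable (fun y ↦ R y * g y) μ) :
    ∫ x, ∫ y, g y * tailProfile c d (R y) x ∂μ = 2 * (c + d) * ∫ y, R y * g y ∂μ := by
  rw [integral_integral_swap (integrable_prod_mul_tailProfile c d hR hR₀ hg hRg),
    ← integral_const_mul]
  congr with y
  rw [integral_const_mul, integral_tailProfile c d (hR₀ y)]
  ring

end Tail

section CubicTransform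

variable (a b : ℝ) {g : ℝ × ℝ → ℝ}

lemma discProfile_sub_add (x : ℝ) (y : ℝ × ℝ) :
    discProfile a b x y - (a + b) = tailProfile (a - b) (-(a + b)) √(y.1 ^ 2 + y.2 ^ 2) x := by
  rw [discProfile, tailProfile, sq_sqrt (by positivity)]
  split_ifs <;> ring

lemma cubicTransform_sub_eq_integral_mul_tailProfile (hg : Continuous g) (hgi : Integrable g)
    (hgf : Integrable (ft2 g)) (hgr : IsRadial g) {x : ℝ} (hx : x ≠ 0) :
    cubicTransform a b x g - ((a + b) * ∫ y, g y : ℝ) =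
      ((∫ y, g y * tailProfile (a - b) (-(a + b)) √(y.1 ^ 2 + y.2 ^ 2) x : ℝ) : ℂ) := by
  have hgd : Integrable fun y ↦ g y * discProfile a b x y :=
    hgi.mul_bdd (integrable_discProfile a b x).aestronglyMeasurable
      (ae_of_all _ (norm_discProfile_le a b x))
  rw [cubicTransform_eq_integral_mul_discProfile a b hg hgi hgf hgr hx, ← Complex.ofReal_sub,
    ← integral_const_mul, ← integral_sub hgd (hgi.const_mul _)]
  simp_rw [← discProfile_sub_add, mul_sub, mul_comm (a + b)]

/- Subtracting the limit `(a + b) * ∫ g` of the transform at infinity leaves a superposition of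
tail profiles, one for each circle; each has integral `-4 * b` times the radius of its circle. -/
theorem integrable_and_integral_cubicTransform_sub (hg : Continuous g) (hgi : Integrable g)
    (hgf : Integrable (ft2 g)) (hgr : IsRadial g)
    (hgm : Integrable fun y : ℝ × ℝ ↦ √(y.1 ^ 2 + y.2 ^ 2) * g y) :
    Integrable (fun x ↦ cubicTransform a b x g - ((a + b) * ∫ y, g y : ℝ)) ∧
      ∫ x, (cubicTransform a b x g - ((a + b) * ∫ y, g y : ℝ)) =
        ((-4 * b * ∫ y : ℝ × ℝ, √(y.1 ^ 2 + y.2 ^ 2) * g y : ℝ) : ℂ) := by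
  have hR : Measurable fun y : ℝ × ℝ ↦ √(y.1 ^ 2 + y.2 ^ 2) := by fun_prop
  have hR₀ (y : ℝ × ℝ) : 0 ≤ √(y.1 ^ 2 + y.2 ^ 2) := sqrt_nonneg _
  have htail := (integrable_prod_mul_tailProfile (a - b) (-(a + b)) hR hR₀
    hg.aestronglyMeasurable hgm).integral_prod_left
  have hae : (fun x ↦ cubicTransform a b x g - ((a + b) * ∫ y, g y : ℝ)) =ᵐ[volume] fun x ↦
      ((∫ y, g y * tailProfile (a - b) (-(a + b)) √(y.1 ^ 2 + y.2 ^ 2) x : ℝ) : ℂ) := by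
    filter_upwards [Measure.ae_ne volume 0] with x hx
    exact cubicTransform_sub_eq_integral_mul_tailProfile a b hg hgi hgf hgr hx
  refine ⟨htail.ofReal.congr hae.symm, ?_⟩
  rw [integral_congr_ae hae, integral_complex_ofReal,
    integral_integral_mul_tailProfile _ _ hR hR₀ hg.aestronglyMeasurable hgm]
  congr 2
  ring

end CubicTransform

section Convolution

variable {ϕ : ℝ × ℝ → ℝ}

lemma conv2_eq_convolution (ϕ : ℝ × ℝ → ℝ) : conv2 ϕ = ϕ ⋆[ContinuousLinearMap.mul ℝ ℝ] ϕ := rfl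

lemma continuous_conv2 (hϕ : Continuous ϕ) (hsupp : HasCompactSupport ϕ) :
    Continuous (conv2 ϕ) := by
  rw [conv2_eq_convolution]
  exact hsupp.continuous_convolution_right _ hϕ.locallyIntegrable hϕ

lemma hasCompactSupport_conv2 (hsupp : HasCompactSupport ϕ) : HasCompactSupport (conv2 ϕ) := by
  rw [conv2_eq_convolution]
  exact hsupp.convolution _ hsupp

lemma integral_conv2 (hϕ : Integrable ϕ) : ∫ x, conv2 ϕ x = (∫ x, ϕ x) ^ 2 := by
  rw [conv2_eq_convolution, integral_convolution _ hϕ hϕ, ContinuousLinearMap.mul_apply', sq]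

end Convolution

lemma f1_eq_cubicTransform (ϕ : ℝ × ℝ → ℝ) (x : ℝ) :
    f1 ϕ x = cubicTransform 0 1 x (conv2 ϕ) := by
  simp [f1, cubicTransform, cubicKernel]

lemma f2_eq_cubicTransform (ϕ : ℝ × ℝ → ℝ) (x : ℝ) :
    f2 ϕ x = cubicTransform 1 (-1) x (conv2 ϕ) := by
  simp [f2, cubicTransform, cubicKernel, ← sub_eq_add_neg]

theorem statement9_general (ϕ : ℝ × ℝ → ℝ)
    (hcont : Continuous ϕ)
    (hsupp : HasCompactSupport ϕ)
    (hradial : ∀ x y : ℝ × ℝ, x.1 ^ 2 + x.2 ^ 2 = y.1 ^ 2 + y.2 ^ 2 → ϕ x = ϕ y)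
    (hnorm : (∫ x : ℝ × ℝ, ϕ x) = 1) :
    Integrable (f2 ϕ) ∧ Integrable (f3 ϕ) ∧
      (∫ x : ℝ, f2 ϕ x) = ((4 * m1 ϕ : ℝ) : ℂ) ∧
      (∫ x : ℝ, f3 ϕ x) = ((-(4 * m1 ϕ) : ℝ) : ℂ) := by
  have hint : Integrable ϕ := hcont.integrable_of_hasCompactSupport hsupp
  have hφ := continuous_conv2 hcont hsupp
  have hφsupp := hasCompactSupport_conv2 hsupp
  have hmoment : Integrable fun y : ℝ × ℝ ↦ √(y.1 ^ 2 + y.2 ^ 2) * conv2 ϕ y :=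
    Continuous.integrable_of_hasCompactSupport (by fun_prop) hφsupp.mul_left
  have key (a b : ℝ) := integrable_and_integral_cubicTransform_sub a b hφ
    (hφ.integrable_of_hasCompactSupport hφsupp)
    (integrable_ft2_conv2 hint (hcont.memLp_of_hasCompactSupport hsupp))
    (IsRadial.conv2 hradial) hmoment
  have hf2 : f2 ϕ = fun x ↦ cubicTransform 1 (-1) x (conv2 ϕ)
      - ((1 + -1) * ∫ y, conv2 ϕ y : ℝ) := by
    ext x; simp [f2_eq_cubicTransform]
  have hf3 : f3 ϕ = fun x ↦ cubicTransform 0 1 x (conv2 ϕ)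
      - ((0 + 1) * ∫ y, conv2 ϕ y : ℝ) := by
    ext x; simp [f3, f1_eq_cubicTransform, integral_conv2 hint, hnorm]
  rw [hf2, hf3]
  refine ⟨(key 1 (-1)).1, (key 0 1).1, (key 1 (-1)).2.trans ?_, (key 0 1).2.trans ?_⟩ <;>
    simp [m1]

/-- Integrability of `f₂`, `f₃` over `ℝ` and the values of their
integrals: `∫ f₂ = 4 m₁` and `∫ f₃ = −4 m₁`. -/
theorem statement9 (ϕ : ℝ × ℝ → ℝ)
    (hsmooth : ContDiff ℝ (⊤ : ℕ∞) ϕ)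
    (hsupp : HasCompactSupport ϕ)
    (hradial : ∀ x y : ℝ × ℝ, x.1 ^ 2 + x.2 ^ 2 = y.1 ^ 2 + y.2 ^ 2 → ϕ x = ϕ y)
    (hnorm : (∫ x : ℝ × ℝ, ϕ x) = 1) :
    Integrable (f2 ϕ) ∧ Integrable (f3 ϕ) ∧
      (∫ x : ℝ, f2 ϕ x) = ((4 * m1 ϕ : ℝ) : ℂ) ∧
      (∫ x : ℝ, f3 ϕ x) = ((-(4 * m1 ϕ) : ℝ) : ℂ) :=
  statement9_general ϕ hsmooth.continuous hsupp hradial hnorm
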